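/- For every ideal C of 𝓡 and every index 0 ≤ i ≤ 2, the torsion degrees satisfy T_i(C⊥) = T_i(𝒜(C)) = 2^s − T_{2−i}(C). -/

import Mathlib

noncomputable section

open Polynomial

/-- The finite field `GF(2^m)`. -/
abbrev Fq (m : ℕ) : Type := GaloisField 2 m

/-- The ring `R₃ = F[u]/⟨u³⟩`. -/
abbrev R3 (m : ℕ) : Type := AdjoinRoot (X ^ 3 : (Fq m)[X])

/-- The polynomial `x^{2^s} + 1` over `R₃`. -/
abbrev gR (m s : ℕ) : (R3 m)[X] := X ^ (2 ^ s) + 1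

/-- The polynomial `x^{2^s} + 1` over `F`. -/
abbrev gK (m s : ℕ) : (Fq m)[X] := X ^ (2 ^ s) + 1

/-- The ring `𝓡 = R₃[x]/⟨x^{2^s}+1⟩`. -/
abbrev RR (m s : ℕ) : Type := AdjoinRoot (gR m s)

/-- The ring `𝓚 = F[x]/⟨x^{2^s}+1⟩`. -/
abbrev KK (m s : ℕ) : Type := AdjoinRoot (gK m s)

/-- The element `u` of `R₃`. -/
def uu (m : ℕ) : R3 m := AdjoinRoot.root _

/-- The element `u` of `𝓡`. -/
def uR (m s : ℕ) : RR m s := algebraMap (R3 m) (RR m s) (uu m)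

/-- The element `x` of `𝓡`. -/
def xR (m s : ℕ) : RR m s := AdjoinRoot.root _

/-- The element `x` of `𝓚`. -/
def xK (m s : ℕ) : KK m s := AdjoinRoot.root _

lemma gR_monic (m s : ℕ) : (gR m s).Monic := by
  have h : (gR m s) = X ^ (2 ^ s) + C 1 := by simp [gR]
  rw [h]; exact monic_X_pow_add_C _ (by positivity)

lemma gK_monic (m s : ℕ) : (gK m s).Monic := by
  have h : (gK m s) = X ^ (2 ^ s) + C 1 := by simp [gK]
  rw [h]; exact monic_X_pow_add_C _ (by positivity)

/-- The standard representative (of degree `< 2^s`) of an element of `𝓡`. -/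
def repR (m s : ℕ) (c : RR m s) : (R3 m)[X] := AdjoinRoot.modByMonicHom (gR_monic m s) c

/-- The standard representative (of degree `< 2^s`) of an element of `𝓚`. -/
def repK (m s : ℕ) (c : KK m s) : (Fq m)[X] := AdjoinRoot.modByMonicHom (gK_monic m s) c

/-- The `j`-th coefficient of the standard representative of `c ∈ 𝓡`. -/
def coeffR (m s : ℕ) (c : RR m s) (j : ℕ) : R3 m := (repR m s c).coeff j

/-- The dot product on `𝓡`. -/
def dotR (m s : ℕ) (c d : RR m s) : R3 m :=
  ∑ j ∈ Finset.range (2 ^ s), coeffR m s c j * coeffR m s d j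

/-- The dual of a set of codewords. -/
def dualSet (m s : ℕ) (S : Set (RR m s)) : Set (RR m s) :=
  {c | ∀ d ∈ S, dotR m s c d = 0}

/-- A cyclic code (ideal of `𝓡`) is self-dual if it coincides with its dual. -/
def IsSelfDual (m s : ℕ) (C : Ideal (RR m s)) : Prop :=
  (C : Set (RR m s)) = dualSet m s (C : Set (RR m s))

/-- The annihilator of a set of codewords. -/
def annSet (m s : ℕ) (S : Set (RR m s)) : Set (RR m s) :=
  {c | ∀ d ∈ S, c * d = 0}

/-- The reciprocal `c*(x) = x^{deg c} c(x⁻¹)` of an element of `𝓡`. -/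
def recip (m s : ℕ) (c : RR m s) : RR m s :=
  xR m s ^ (repR m s c).natDegree *
    Polynomial.aeval (Ring.inverse (xR m s)) (repR m s c)

/-- Reduction `R₃ → F` modulo `u`. -/
def epsR3 (m : ℕ) : R3 m →+* Fq m :=
  AdjoinRoot.lift (RingHom.id (Fq m)) 0 (by simp)

lemma xK_pow_add_one (m s : ℕ) : (xK m s) ^ (2 ^ s) + 1 = 0 := by
  have h := AdjoinRoot.eval₂_root (gK m s)
  simpa [gK, xK] using h

lemma xR_pow_add_one (m s : ℕ) : (xR m s) ^ (2 ^ s) + 1 = 0 := by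
  have h := AdjoinRoot.eval₂_root (gR m s)
  simpa [gR, xR] using h

/-- Reduction `μ : 𝓡 → 𝓚` modulo `u`. -/
def muRK (m s : ℕ) : RR m s →+* KK m s :=
  AdjoinRoot.lift ((algebraMap (Fq m) (KK m s)).comp (epsR3 m)) (xK m s) (by
    simp only [gR, eval₂_add, eval₂_pow, eval₂_X, eval₂_one]
    exact xK_pow_add_one m s)

/-- The natural inclusion `𝓚 → 𝓡`. -/
def KtoR (m s : ℕ) : KK m s →+* RR m s :=
  AdjoinRoot.lift ((algebraMap (R3 m) (RR m s)).comp (algebraMap (Fq m) (R3 m))) (xR m s) (by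
    simp only [gK, eval₂_add, eval₂_pow, eval₂_X, eval₂_one]
    exact xR_pow_add_one m s)

/-- The `i`-th torsion code of a set `S ⊆ 𝓡`. -/
def TorSet (m s : ℕ) (S : Set (RR m s)) (i : ℕ) : Set (KK m s) :=
  muRK m s '' {f | (uR m s) ^ i * f ∈ S}

/-- The torsion degree `T_i`: the (unique) `k` with `Tor_i = ⟨(x+1)^k⟩`. -/
def Tdeg (m s : ℕ) (S : Set (RR m s)) (i : ℕ) : ℕ :=
  sInf {k | TorSet m s S i =
    ((Ideal.span {(xK m s + 1) ^ k} : Ideal (KK m s)) : Set (KK m s))}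

/-- Substitution `h(x) ↦ h(x⁻¹)` on `𝓚`. -/
def invSub (m s : ℕ) (h : KK m s) : KK m s :=
  Polynomial.aeval (Ring.inverse (xK m s)) (repK m s h)


/-! ### Auxiliary material for the proof -/

/-- Frobenius-type duality: the annihilator of an intersection is the sum of annihilators. -/
lemma aux_ann_inf {F A : Type*} [Field F] [CommRing A] [Algebra F A] [Module.Finite F A]
    (psi : A →ₗ[F] F) (hpsi : ∀ e, (∀ d, psi (e * d) = 0) → e = 0)
    (I J : Ideal A) (x : A) (hx : ∀ y ∈ I ⊓ J, x * y = 0) :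
    ∃ a b, x = a + b ∧ (∀ y ∈ I, a * y = 0) ∧ (∀ y ∈ J, b * y = 0) := by
  let B : A →ₗ[F] Module.Dual F A := (LinearMap.mul F A).compr₂ psi
  have hB : ∀ a d, B a d = psi (a * d) := fun a d => rfl
  have hinj : Function.Injective B := by
    rw [injective_iff_map_eq_zero]
    intro e he
    apply hpsi
    intro d
    rw [← hB, he]; rfl
  have hsurj : Function.Surjective B :=
    (LinearMap.injective_iff_surjective_of_finrank_eq_finrank
      (Subspace.dual_finrank_eq (K := F) (V := A)).symm).mp hinj
  have hmem : B x ∈ ((I.restrictScalars F) ⊓ (J.restrictScalars F)).dualAnnihilator := by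
    rw [Submodule.mem_dualAnnihilator]
    intro y hy
    rw [hB, hx y hy, map_zero]
  rw [Subspace.dualAnnihilator_inf_eq, Submodule.mem_sup] at hmem
  obtain ⟨p, hp, q, hq, hpq⟩ := hmem
  obtain ⟨a, rfl⟩ := hsurj p
  obtain ⟨b, rfl⟩ := hsurj q
  have key : ∀ (L : Ideal A) (c : A), B c ∈ (L.restrictScalars F).dualAnnihilator →
      ∀ y ∈ L, c * y = 0 := by
    intro L c hc y hy
    rw [Submodule.mem_dualAnnihilator] at hc
    apply hpsi
    intro d
    have := hc (y * d) (L.mul_mem_right d hy)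
    rw [hB] at this
    rw [mul_assoc]; exact this
  refine ⟨a, b, ?_, key I a hp, key J b hq⟩
  apply hinj
  rw [map_add, hpq]

lemma X3_monic (m : ℕ) : (X ^ 3 : (Fq m)[X]).Monic := monic_X_pow 3

/-- The coefficient of `u²` on `R₃`. -/
def cf2 (m : ℕ) : R3 m →ₗ[Fq m] Fq m :=
  (Polynomial.lcoeff (Fq m) 2).comp (AdjoinRoot.modByMonicHom (X3_monic m))

lemma cf2_mk (m : ℕ) (q : (Fq m)[X]) : cf2 m (AdjoinRoot.mk _ q) = q.coeff 2 := by
  have h := modByMonic_add_div q (X ^ 3 : (Fq m)[X])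
  have h2 : q.coeff 2 = (q %ₘ (X ^ 3) + X ^ 3 * (q /ₘ X ^ 3)).coeff 2 := by rw [h]
  rw [h2, coeff_add, coeff_X_pow_mul']
  simp [cf2]

lemma cf2_nondeg (m : ℕ) (r : R3 m) (h : ∀ t, cf2 m (r * t) = 0) : r = 0 := by
  obtain ⟨p, rfl⟩ := AdjoinRoot.mk_surjective r
  rw [AdjoinRoot.mk_eq_zero, X_pow_dvd_iff]
  intro d hd
  have h1 := h (AdjoinRoot.mk _ (X ^ (2 - d)))
  rw [← map_mul, cf2_mk, coeff_mul_X_pow'] at h1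
  rw [if_pos (by omega)] at h1
  have : 2 - (2 - d) = d := by omega
  rwa [this] at h1

lemma uu_pow_mul_eq_zero (m j : ℕ) (hj : j ≤ 3) (r : R3 m) (h : uu m ^ j * r = 0) :
    ∃ t, r = uu m ^ (3 - j) * t := by
  obtain ⟨p, rfl⟩ := AdjoinRoot.mk_surjective r
  have h0 : uu m = AdjoinRoot.mk _ X := rfl
  rw [h0, ← map_pow, ← map_mul, AdjoinRoot.mk_eq_zero] at h
  have h3 : (X ^ 3 : (Fq m)[X]) = X ^ j * X ^ (3 - j) := by
    rw [← pow_add]; congr 1; omega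
  rw [h3] at h
  obtain ⟨t, rfl⟩ := (mul_dvd_mul_iff_left (pow_ne_zero j X_ne_zero)).mp h
  exact ⟨AdjoinRoot.mk _ t, by rw [h0, ← map_pow, ← map_mul]⟩

lemma uu_cube (m : ℕ) : uu m ^ 3 = 0 := by
  have h0 : uu m = AdjoinRoot.mk _ X := rfl
  rw [h0, ← map_pow, AdjoinRoot.mk_eq_zero]

lemma eps_uu (m : ℕ) : epsR3 m (uu m) = 0 := by
  simp [epsR3, uu]

lemma eps_eq_zero (m : ℕ) (r : R3 m) (h : epsR3 m r = 0) : ∃ t, r = uu m * t := by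
  obtain ⟨p, rfl⟩ := AdjoinRoot.mk_surjective r
  have h1 : p.eval 0 = 0 := by
    simpa [epsR3, eval₂_eq_eval_map] using h
  have h2 : X ∣ p := by
    rw [X_dvd_iff, coeff_zero_eq_eval_zero, h1]
  obtain ⟨t, rfl⟩ := h2
  exact ⟨AdjoinRoot.mk _ t, by rw [map_mul]; rfl⟩

lemma eps_surj (m : ℕ) : Function.Surjective (epsR3 m) := by
  intro a
  refine ⟨AdjoinRoot.of _ a, ?_⟩
  simp [epsR3]

lemma uR_cube (m s : ℕ) : uR m s ^ 3 = 0 := by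
  rw [uR, ← map_pow, uu_cube, map_zero]

lemma mu_uR (m s : ℕ) : muRK m s (uR m s) = 0 := by
  have h : uR m s = AdjoinRoot.of _ (uu m) := rfl
  rw [h, muRK, AdjoinRoot.lift_of, RingHom.comp_apply, eps_uu, map_zero]

lemma mu_mk (m s : ℕ) (p : (R3 m)[X]) :
    muRK m s (AdjoinRoot.mk _ p) = AdjoinRoot.mk _ (p.map (epsR3 m)) := by
  rw [muRK, AdjoinRoot.lift_mk, ← eval₂_map, ← AdjoinRoot.aeval_eq]
  rfl

lemma mu_surj (m s : ℕ) : Function.Surjective (muRK m s) := by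
  intro a
  obtain ⟨p, rfl⟩ := AdjoinRoot.mk_surjective a
  obtain ⟨q, rfl⟩ := Polynomial.map_surjective _ (eps_surj m) p
  exact ⟨AdjoinRoot.mk _ q, mu_mk m s q⟩

lemma poly_dvd_of_coeff {R : Type*} [CommRing R] (a : R) (p : R[X])
    (h : ∀ k, ∃ t, p.coeff k = a * t) : ∃ q, p = Polynomial.C a * q := by
  have : Polynomial.C a ∣ p := by
    rw [Polynomial.C_dvd_iff_dvd_coeff]
    intro k
    obtain ⟨t, ht⟩ := h k
    exact ⟨t, ht⟩
  exact this

lemma mu_eq_zero (m s : ℕ) (f : RR m s) (h : muRK m s f = 0) : ∃ g, f = uR m s * g := by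
  obtain ⟨p, rfl⟩ := AdjoinRoot.mk_surjective f
  rw [mu_mk, AdjoinRoot.mk_eq_zero] at h
  obtain ⟨q, hq⟩ := h
  obtain ⟨q, rfl⟩ := Polynomial.map_surjective _ (eps_surj m) q
  have h1 : (p - gR m s * q).map (epsR3 m) = 0 := by
    rw [Polynomial.map_sub, hq, Polynomial.map_mul]
    simp [gR, gK]
  obtain ⟨t, ht⟩ := poly_dvd_of_coeff (uu m) (p - gR m s * q) (by
    intro k
    apply eps_eq_zero
    rw [← coeff_map, h1, coeff_zero])
  refine ⟨AdjoinRoot.mk _ t, ?_⟩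
  have h2 := congrArg (AdjoinRoot.mk (gR m s)) ht
  rw [map_sub, map_mul, AdjoinRoot.mk_self, zero_mul, sub_zero, map_mul] at h2
  exact h2

lemma uR_pow_mul_eq_zero (m s j : ℕ) (hj : j ≤ 3) (f : RR m s) (h : uR m s ^ j * f = 0) :
    ∃ g, f = uR m s ^ (3 - j) * g := by
  have h1 : uR m s ^ j * f = (uu m ^ j) • f := by
    rw [Algebra.smul_def, uR, map_pow]
  obtain ⟨t, ht⟩ := poly_dvd_of_coeff (uu m ^ (3 - j)) (repR m s f) (by
    intro k
    apply uu_pow_mul_eq_zero m j hj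
    have h2 : repR m s ((uu m ^ j) • f) = 0 := by
      rw [← h1, h, repR, map_zero]
    rw [repR, map_smul] at h2
    have h3 := congrArg (fun p => coeff p k) h2
    simpa [repR] using h3)
  refine ⟨AdjoinRoot.mk _ t, ?_⟩
  have h2 := congrArg (AdjoinRoot.mk (gR m s)) ht
  rw [repR, AdjoinRoot.mk_leftInverse, map_mul, ] at h2
  rw [h2, uR, ← map_pow]; rfl

lemma uR_sq_mul_eq_zero_iff (m s : ℕ) (f : RR m s) :
    uR m s ^ 2 * f = 0 ↔ muRK m s f = 0 := by
  constructor
  · intro h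
    obtain ⟨g, rfl⟩ := uR_pow_mul_eq_zero m s 2 (by norm_num) f h
    rw [map_mul, map_pow, mu_uR]; simp
  · intro h
    obtain ⟨g, rfl⟩ := mu_eq_zero m s f h
    have : uR m s ^ 2 * (uR m s * g) = uR m s ^ 3 * g := by ring
    rw [this, uR_cube, zero_mul]

lemma Fq_two (m : ℕ) : (2 : Fq m) = 0 := CharTwo.two_eq_zero

lemma RR_two (m s : ℕ) : (2 : RR m s) = 0 := by
  have h : ((algebraMap (R3 m) (RR m s)).comp (algebraMap (Fq m) (R3 m))) 2 = 2 := map_ofNat _ 2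
  rw [← h, Fq_two, map_zero]

lemma KK_two (m s : ℕ) : (2 : KK m s) = 0 := by
  have h : (algebraMap (Fq m) (KK m s)) 2 = 2 := map_ofNat _ 2
  rw [← h, Fq_two, map_zero]

lemma xR_pow_eq_one (m s : ℕ) : (xR m s) ^ (2 ^ s) = 1 := by
  linear_combination xR_pow_add_one m s - RR_two m s

lemma xK_pow_eq_one (m s : ℕ) : (xK m s) ^ (2 ^ s) = 1 := by
  linear_combination xK_pow_add_one m s - KK_two m s

/-- The substitution `x ↦ x⁻¹ = x^{2^s-1}` on `𝓡`. -/
def sig (m s : ℕ) : RR m s →+* RR m s :=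
  AdjoinRoot.lift (algebraMap (R3 m) (RR m s)) (xR m s ^ (2 ^ s - 1)) (by
    simp only [gR, eval₂_add, eval₂_pow, eval₂_X, eval₂_one]
    rw [← pow_mul, mul_comm, pow_mul, xR_pow_eq_one, one_pow]
    linear_combination RR_two m s)

/-- The substitution `x ↦ x⁻¹ = x^{2^s-1}` on `𝓚`. -/
def tau (m s : ℕ) : KK m s →+* KK m s :=
  AdjoinRoot.lift (algebraMap (Fq m) (KK m s)) (xK m s ^ (2 ^ s - 1)) (by
    simp only [gK, eval₂_add, eval₂_pow, eval₂_X, eval₂_one]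
    rw [← pow_mul, mul_comm, pow_mul, xK_pow_eq_one, one_pow]
    linear_combination KK_two m s)

lemma sig_x (m s : ℕ) : sig m s (xR m s) = xR m s ^ (2 ^ s - 1) := by
  simp [sig, xR]

lemma sig_alg (m s : ℕ) (r : R3 m) :
    sig m s (algebraMap (R3 m) (RR m s) r) = algebraMap (R3 m) (RR m s) r :=
  AdjoinRoot.lift_of _

lemma tau_x (m s : ℕ) : tau m s (xK m s) = xK m s ^ (2 ^ s - 1) := by
  simp [tau, xK]

lemma tau_alg (m s : ℕ) (r : Fq m) :
    tau m s (algebraMap (Fq m) (KK m s) r) = algebraMap (Fq m) (KK m s) r :=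
  AdjoinRoot.lift_of _

lemma mu_x (m s : ℕ) : muRK m s (xR m s) = xK m s := by
  simp [muRK, xR]

lemma mu_alg (m s : ℕ) (r : R3 m) :
    muRK m s (algebraMap (R3 m) (RR m s) r) = algebraMap (Fq m) (KK m s) (epsR3 m r) :=
  AdjoinRoot.lift_of _

/-- Ring homs out of `𝓡` are determined by their values on constants and on `x`. -/
lemma RR_hom_ext (m s : ℕ) {S : Type*} [CommRing S] (f g : RR m s →+* S)
    (h1 : ∀ r, f (algebraMap (R3 m) (RR m s) r) = g (algebraMap (R3 m) (RR m s) r))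
    (h2 : f (xR m s) = g (xR m s)) (c : RR m s) : f c = g c := by
  obtain ⟨p, rfl⟩ := AdjoinRoot.mk_surjective c
  have : f.comp (AdjoinRoot.mk (gR m s)) = g.comp (AdjoinRoot.mk (gR m s)) := by
    apply Polynomial.ringHom_ext
    · intro a; exact h1 a
    · exact h2
  exact RingHom.congr_fun this p

lemma pow_pred_sq {S : Type*} [CommRing S] (x : S) (N : ℕ) (hN : 0 < N) (h : x ^ N = 1) :
    (x ^ (N - 1)) ^ (N - 1) = x := by
  have h1 : x ^ (N - 1) * x = 1 := by rw [← pow_succ, Nat.sub_add_cancel hN, h]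
  have h2 : (x ^ (N - 1)) ^ (N - 1) * x ^ (N - 1) = 1 := by
    rw [← mul_pow, ← pow_succ, Nat.sub_add_cancel hN, h, one_pow]
  calc (x ^ (N - 1)) ^ (N - 1) = (x ^ (N - 1)) ^ (N - 1) * (x ^ (N - 1) * x) := by rw [h1, mul_one]
    _ = ((x ^ (N - 1)) ^ (N - 1) * x ^ (N - 1)) * x := by ring
    _ = x := by rw [h2, one_mul]

lemma sig_sig (m s : ℕ) (c : RR m s) : sig m s (sig m s c) = c := by
  refine RR_hom_ext m s ((sig m s).comp (sig m s)) (RingHom.id _) ?_ ?_ c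
  · intro r; rw [RingHom.comp_apply, sig_alg, sig_alg, RingHom.id_apply]
  · rw [RingHom.comp_apply, sig_x, map_pow, sig_x]
    exact pow_pred_sq _ _ (by positivity) (xR_pow_eq_one m s)

lemma mu_sig (m s : ℕ) (c : RR m s) : muRK m s (sig m s c) = tau m s (muRK m s c) := by
  refine RR_hom_ext m s ((muRK m s).comp (sig m s)) ((tau m s).comp (muRK m s)) ?_ ?_ c
  · intro r; simp only [RingHom.comp_apply, sig_alg, mu_alg, tau_alg]
  · simp only [RingHom.comp_apply, sig_x, mu_x, tau_x, map_pow]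

lemma gR_natDegree (m s : ℕ) : (gR m s).natDegree = 2 ^ s := by
  have h : (gR m s) = X ^ (2 ^ s) + Polynomial.C 1 := by simp [gR]
  have : Nontrivial (R3 m) := AdjoinRoot.nontrivial _ (by simp)
  rw [h, natDegree_X_pow_add_C]

lemma repR_sum (m s : ℕ) (c : RR m s) :
    c = ∑ j ∈ Finset.range (2 ^ s), algebraMap (R3 m) (RR m s) (coeffR m s c j) * xR m s ^ j := by
  have : Nontrivial (R3 m) := AdjoinRoot.nontrivial _ (by simp)
  have h1 : AdjoinRoot.mk _ (repR m s c) = c := AdjoinRoot.mk_leftInverse (gR_monic m s) c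
  have hd : (repR m s c).natDegree < 2 ^ s := by
    obtain ⟨p, rfl⟩ := AdjoinRoot.mk_surjective c
    rw [repR, AdjoinRoot.modByMonicHom_mk]
    have := natDegree_modByMonic_lt p (gR_monic m s) (by
      intro h
      have := congrArg natDegree h
      rw [gR_natDegree, natDegree_one] at this
      have : 0 < 2 ^ s := by positivity
      omega)
    rwa [gR_natDegree] at this
  conv_lhs => rw [← h1, as_sum_range' (repR m s c) (2 ^ s) hd, map_sum]
  refine Finset.sum_congr rfl fun j _ => ?_
  rw [← C_mul_X_pow_eq_monomial, map_mul, map_pow]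
  rfl

lemma coeffR_x_pow_lt (m s j k : ℕ) (hj : j < 2 ^ s) :
    coeffR m s (xR m s ^ j) k = if k = j then 1 else 0 := by
  have : Nontrivial (R3 m) := AdjoinRoot.nontrivial _ (by simp)
  have h0 : xR m s ^ j = AdjoinRoot.mk _ (X ^ j) := by rw [map_pow]; rfl
  rw [coeffR, repR, h0, AdjoinRoot.modByMonicHom_mk, (modByMonic_eq_self_iff (gR_monic m s)).mpr,
    coeff_X_pow]
  rw [degree_X_pow, degree_eq_natDegree (gR_monic m s).ne_zero, gR_natDegree]
  exact_mod_cast hj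

/-- `coeffR` as a linear map. -/
def cfl (m s k : ℕ) : RR m s →ₗ[R3 m] R3 m :=
  (Polynomial.lcoeff (R3 m) k).comp (AdjoinRoot.modByMonicHom (gR_monic m s))

lemma cfl_apply (m s k : ℕ) (c : RR m s) : cfl m s k c = coeffR m s c k := rfl

lemma cfl_x_mul (m s j k : ℕ) (hj : j < 2 ^ s) (hk : k < 2 ^ s) :
    cfl m s 0 ((xR m s ^ (2 ^ s - 1)) ^ j * xR m s ^ k) = if j = k then 1 else 0 := by
  have h1 : xR m s ^ (2 ^ s - 1) * xR m s = 1 := by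
    rw [← pow_succ, Nat.sub_add_cancel (by positivity : 0 < 2 ^ s), xR_pow_eq_one]
  rcases le_or_gt j k with h | h
  · obtain ⟨d, rfl⟩ := Nat.exists_eq_add_of_le h
    rw [pow_add, ← mul_assoc, ← mul_pow, h1, one_pow, one_mul, cfl_apply,
      coeffR_x_pow_lt _ _ _ _ (by omega)]
    by_cases hd : d = 0
    · simp [hd]
    · rw [if_neg (by omega), if_neg (by omega)]
  · obtain ⟨d, rfl⟩ := Nat.exists_eq_add_of_le h.le
    have h2 : (xR m s ^ (2 ^ s - 1)) ^ d = xR m s ^ (2 ^ s - d) := by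
      have e1 : (xR m s ^ (2 ^ s - 1)) ^ d * xR m s ^ d = 1 := by
        rw [← mul_pow, h1, one_pow]
      have e2 : xR m s ^ (2 ^ s - d) * xR m s ^ d = 1 := by
        rw [← pow_add, Nat.sub_add_cancel (by omega), xR_pow_eq_one]
      calc (xR m s ^ (2 ^ s - 1)) ^ d
          = (xR m s ^ (2 ^ s - 1)) ^ d * (xR m s ^ (2 ^ s - d) * xR m s ^ d) := by
            rw [e2, mul_one]
        _ = ((xR m s ^ (2 ^ s - 1)) ^ d * xR m s ^ d) * xR m s ^ (2 ^ s - d) := by ring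
        _ = _ := by rw [e1, one_mul]
    rw [add_comm k d, pow_add, mul_assoc, ← mul_pow, h1, one_pow, mul_one, h2, cfl_apply,
      coeffR_x_pow_lt _ _ _ _ (by omega), if_neg (by omega), if_neg (by omega)]

/-- The dot product through the constant coefficient. -/
lemma dotR_eq (m s : ℕ) (c d : RR m s) : dotR m s c d = cfl m s 0 (sig m s c * d) := by
  have hc : sig m s c = ∑ j ∈ Finset.range (2 ^ s),
      algebraMap (R3 m) (RR m s) (coeffR m s c j) * (xR m s ^ (2 ^ s - 1)) ^ j := by
    conv_lhs => rw [repR_sum m s c, map_sum]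
    refine Finset.sum_congr rfl fun j _ => ?_
    rw [map_mul, map_pow, sig_alg, sig_x]
  conv_rhs => rw [hc, repR_sum m s d, Finset.sum_mul_sum, map_sum]
  rw [dotR]
  refine Finset.sum_congr rfl fun j hj => ?_
  rw [map_sum, Finset.sum_eq_single j]
  · rw [mul_mul_mul_comm, ← map_mul, ← Algebra.smul_def, map_smul,
      cfl_x_mul m s j j (Finset.mem_range.mp hj) (Finset.mem_range.mp hj)]
    simp
  · intro k hk hkj
    rw [mul_mul_mul_comm, ← map_mul, ← Algebra.smul_def, map_smul,
      cfl_x_mul m s j k (Finset.mem_range.mp hj) (Finset.mem_range.mp hk),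
      if_neg (Ne.symm hkj), smul_zero]
  · intro h; exact absurd hj h

lemma cfl_nondeg (m s : ℕ) (e : RR m s) (h : ∀ d, cfl m s 0 (e * d) = 0) : e = 0 := by
  rw [repR_sum m s e]
  refine Finset.sum_eq_zero fun k hk => ?_
  have h1 : dotR m s (xR m s ^ k) e = coeffR m s e k := by
    rw [dotR, Finset.sum_eq_single k]
    · rw [coeffR_x_pow_lt _ _ _ _ (Finset.mem_range.mp hk), if_pos rfl, one_mul]
    · intro j _ hj
      rw [coeffR_x_pow_lt _ _ _ _ (Finset.mem_range.mp hk), if_neg hj, zero_mul]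
    · intro h; exact absurd hk h
  rw [dotR_eq, mul_comm, h] at h1
  rw [← h1, map_zero, zero_mul]

lemma mem_dualSet_iff (m s : ℕ) (C : Ideal (RR m s)) (c : RR m s) :
    c ∈ dualSet m s (C : Set (RR m s)) ↔ sig m s c ∈ annSet m s (C : Set (RR m s)) := by
  constructor
  · intro h d hd
    apply cfl_nondeg
    intro e
    rw [mul_assoc, ← dotR_eq]
    exact h _ (C.mul_mem_right e hd)
  · intro h d hd
    rw [dotR_eq, h d hd, map_zero]

/-- The Frobenius functional on `𝓡`. -/
def psiR (m s : ℕ) : RR m s →ₗ[Fq m] Fq m :=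
  (cf2 m).comp ((cfl m s 0).restrictScalars (Fq m))

lemma psiR_nondeg (m s : ℕ) (e : RR m s) (h : ∀ d, psiR m s (e * d) = 0) : e = 0 := by
  apply cfl_nondeg
  intro d
  apply cf2_nondeg
  intro t
  have h1 := h (t • d)
  rw [mul_smul_comm] at h1
  have h2 : psiR m s (t • (e * d)) = cf2 m (cfl m s 0 (t • (e * d))) := rfl
  rw [h2, map_smul, smul_eq_mul, mul_comm] at h1
  exact h1

instance finRR (m s : ℕ) : Module.Finite (Fq m) (RR m s) := by
  have : Module.Finite (Fq m) (R3 m) := (X3_monic m).finite_adjoinRoot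
  have : Module.Finite (R3 m) (RR m s) := (gR_monic m s).finite_adjoinRoot
  exact Module.Finite.trans (R3 m) (RR m s)

/-- The torsion codes of the annihilator are annihilators of the torsion codes. -/
lemma Tor_ann (m s : ℕ) (C : Ideal (RR m s)) (i : ℕ) (hi : i ≤ 2) (a : KK m s) :
    a ∈ TorSet m s (annSet m s (C : Set (RR m s))) i ↔
      ∀ b ∈ TorSet m s (C : Set (RR m s)) (2 - i), a * b = 0 := by
  have hu : ∀ f g : RR m s, (uR m s ^ i * f) * (uR m s ^ (2 - i) * g) = uR m s ^ 2 * (f * g) := by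
    intro f g
    have : uR m s ^ 2 = uR m s ^ i * uR m s ^ (2 - i) := by rw [← pow_add]; congr 1; omega
    rw [this]; ring
  constructor
  · rintro ⟨f, hf, rfl⟩ b ⟨g, hg, rfl⟩
    rw [← map_mul, ← uR_sq_mul_eq_zero_iff, ← hu]
    exact hf _ hg
  · intro h
    obtain ⟨f, rfl⟩ := mu_surj m s a
    obtain ⟨α, β, hab, hα, hβ⟩ := aux_ann_inf (psiR m s) (psiR_nondeg m s) C
      (Ideal.span {uR m s ^ (2 - i)}) (uR m s ^ i * f) (by
        rintro y ⟨hy1, hy2⟩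
        obtain ⟨g, rfl⟩ := Ideal.mem_span_singleton.mp hy2
        rw [hu, uR_sq_mul_eq_zero_iff, map_mul]
        exact h _ ⟨g, hy1, rfl⟩)
    have h1 := hβ _ (Ideal.mem_span_singleton_self _)
    rw [mul_comm] at h1
    obtain ⟨t, ht⟩ := uR_pow_mul_eq_zero m s (2 - i) (by omega) β h1
    have h3 : 3 - (2 - i) = i + 1 := by omega
    rw [h3] at ht
    refine ⟨f - uR m s * t, ?_, by rw [map_sub, map_mul, mu_uR]; simp⟩
    have h4 : uR m s ^ i * (f - uR m s * t) = α := by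
      rw [mul_sub, hab, ht]; ring
    rw [Set.mem_ofPred_eq, h4]
    exact hα

/-! ### Ideals of `𝓚` -/

lemma gK_eq (m s : ℕ) : gK m s = (X + 1) ^ (2 ^ s) := by
  rw [add_pow_char_pow, one_pow]

lemma X1_prime (m : ℕ) : Prime (X + 1 : (Fq m)[X]) := by
  have := prime_X_sub_C (-1 : Fq m)
  simpa using this

lemma x1_pow (m s k : ℕ) : (xK m s + 1) ^ k = AdjoinRoot.mk (gK m s) ((X + 1) ^ k) := by
  rw [map_pow, map_add, map_one]; rfl

lemma mk_mem_span (m s k : ℕ) (hk : k ≤ 2 ^ s) (p : (Fq m)[X]) :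
    AdjoinRoot.mk (gK m s) p ∈ Ideal.span {(xK m s + 1) ^ k} ↔ (X + 1) ^ k ∣ p := by
  rw [Ideal.mem_span_singleton, x1_pow]
  constructor
  · rintro ⟨q, hq⟩
    obtain ⟨q, rfl⟩ := AdjoinRoot.mk_surjective q
    rw [← map_mul, AdjoinRoot.mk_eq_mk, gK_eq] at hq
    have h1 := (pow_dvd_pow (X + 1 : (Fq m)[X]) hk).trans hq
    exact (dvd_sub_left (dvd_mul_right _ _)).mp h1
  · exact map_dvd _

lemma KK_ideal (m s : ℕ) (I : Ideal (KK m s)) :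
    ∃ k ≤ 2 ^ s, I = Ideal.span {(xK m s + 1) ^ k} := by
  obtain ⟨g, hg⟩ := (IsPrincipalIdealRing.principal (I.comap (AdjoinRoot.mk (gK m s)))).principal
  have hg' : ∀ p, AdjoinRoot.mk (gK m s) p ∈ I ↔ g ∣ p := by
    intro p
    rw [← Ideal.mem_comap, hg, Ideal.submodule_span_eq, Ideal.mem_span_singleton]
  have h1 : g ∣ (X + 1) ^ (2 ^ s) := by
    rw [← hg', ← gK_eq, AdjoinRoot.mk_self]; exact I.zero_mem
  obtain ⟨k, hk, hass⟩ := (dvd_prime_pow (X1_prime m) _).mp h1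
  refine ⟨k, hk, ?_⟩
  ext a
  obtain ⟨p, rfl⟩ := AdjoinRoot.mk_surjective a
  rw [hg', mk_mem_span m s k hk, hass.dvd_iff_dvd_left]

lemma Tdeg_eq (m s : ℕ) (S : Set (RR m s)) (i k : ℕ) (hk : k ≤ 2 ^ s)
    (h : TorSet m s S i = ((Ideal.span {(xK m s + 1) ^ k} : Ideal (KK m s)) : Set (KK m s))) :
    Tdeg m s S i = k := by
  apply le_antisymm
  · exact Nat.sInf_le h
  · apply le_csInf ⟨k, h⟩
    intro k' hk'
    by_contra hlt
    push Not at hlt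
    have h1 : (xK m s + 1) ^ k' ∈ Ideal.span {(xK m s + 1) ^ k} := by
      rw [← SetLike.mem_coe, ← h, hk']
      exact Ideal.mem_span_singleton_self _
    rw [x1_pow m s k', mk_mem_span m s k hk] at h1
    have := (pow_dvd_pow_iff (X1_prime m).ne_zero (X1_prime m).not_unit).mp h1
    omega

lemma mem_span_iff_ann (m s k : ℕ) (hk : k ≤ 2 ^ s) (a : KK m s) :
    (∀ b ∈ Ideal.span {(xK m s + 1) ^ k}, a * b = 0) ↔
      a ∈ Ideal.span {(xK m s + 1) ^ (2 ^ s - k)} := by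
  obtain ⟨p, rfl⟩ := AdjoinRoot.mk_surjective a
  rw [mk_mem_span m s _ (Nat.sub_le _ _)]
  have h0 : (X + 1 : (Fq m)[X]) ^ (2 ^ s) = (X + 1) ^ (2 ^ s - k) * (X + 1) ^ k := by
    rw [← pow_add, Nat.sub_add_cancel hk]
  have h1 : AdjoinRoot.mk (gK m s) p * (xK m s + 1) ^ k = 0 ↔ (X + 1) ^ (2 ^ s - k) ∣ p := by
    rw [x1_pow, ← map_mul, AdjoinRoot.mk_eq_zero, gK_eq, h0,
      mul_dvd_mul_iff_right (pow_ne_zero _ (X1_prime m).ne_zero)]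
  rw [← h1]
  constructor
  · intro h; exact h _ (Ideal.mem_span_singleton_self _)
  · intro h b hb
    obtain ⟨c, rfl⟩ := Ideal.mem_span_singleton.mp hb
    rw [← mul_assoc, h, zero_mul]

lemma tau_mem (m s k : ℕ) (a : KK m s) (h : a ∈ Ideal.span {(xK m s + 1) ^ k}) :
    tau m s a ∈ Ideal.span {(xK m s + 1) ^ k} := by
  rw [Ideal.mem_span_singleton] at h ⊢
  refine dvd_trans ?_ (map_dvd (tau m s) h)
  rw [map_pow, map_add, map_one, tau_x]
  apply pow_dvd_pow_of_dvd
  refine ⟨xK m s ^ (2 ^ s - 1), ?_⟩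
  have h1 : xK m s * xK m s ^ (2 ^ s - 1) = 1 := by
    rw [← pow_succ', Nat.sub_add_cancel (by positivity : 0 < 2 ^ s), xK_pow_eq_one]
  rw [add_mul, h1, one_mul, add_comm]

/-- For every ideal `C` of `𝓡` and `0 ≤ i ≤ 2`,
`T_i(C⊥) = T_i(𝒜(C)) = 2^s − T_{2−i}(C)`. -/
theorem stmt1 (m s : ℕ) (hm : 0 < m) (hs : 0 < s) (C : Ideal (RR m s)) (i : ℕ) (hi : i ≤ 2) :
    Tdeg m s (dualSet m s (C : Set (RR m s))) i = Tdeg m s (annSet m s (C : Set (RR m s))) i ∧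
    Tdeg m s (annSet m s (C : Set (RR m s))) i = 2 ^ s - Tdeg m s (C : Set (RR m s)) (2 - i) := by
  obtain ⟨k, hk, hI⟩ := KK_ideal m s
    (Ideal.map (muRK m s) (Submodule.comap (LinearMap.mulLeft (RR m s) (uR m s ^ (2 - i))) C))
  have hTC : TorSet m s (C : Set (RR m s)) (2 - i) =
      ((Ideal.span {(xK m s + 1) ^ k} : Ideal (KK m s)) : Set (KK m s)) := by
    rw [← hI]
    ext a
    rw [SetLike.mem_coe, Ideal.mem_map_iff_of_surjective _ (mu_surj m s)]
    rfl
  have hTA : TorSet m s (annSet m s (C : Set (RR m s))) i =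
      ((Ideal.span {(xK m s + 1) ^ (2 ^ s - k)} : Ideal (KK m s)) : Set (KK m s)) := by
    ext a
    rw [Tor_ann m s C i hi, hTC, SetLike.mem_coe, ← mem_span_iff_ann m s k hk]
    rfl
  have hu : ∀ f, sig m s (uR m s ^ i * f) = uR m s ^ i * sig m s f := by
    intro f
    rw [map_mul, map_pow, uR, sig_alg]
  have hTD : TorSet m s (dualSet m s (C : Set (RR m s))) i =
      ((Ideal.span {(xK m s + 1) ^ (2 ^ s - k)} : Ideal (KK m s)) : Set (KK m s)) := by
    ext a
    constructor
    · rintro ⟨f, hf, rfl⟩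
      rw [Set.mem_ofPred_eq, mem_dualSet_iff, hu] at hf
      have h1 : muRK m s (sig m s f) ∈ TorSet m s (annSet m s (C : Set (RR m s))) i :=
        ⟨_, hf, rfl⟩
      rw [hTA] at h1
      have h2 := tau_mem m s _ _ h1
      rw [← mu_sig, sig_sig] at h2
      exact h2
    · intro ha
      have h1 := tau_mem m s _ _ ha
      rw [← SetLike.mem_coe, ← hTA] at h1
      obtain ⟨f, hf, hfa⟩ := h1
      obtain ⟨g, rfl⟩ := mu_surj m s a
      refine ⟨sig m s f, ?_, ?_⟩
      · rw [Set.mem_ofPred_eq, mem_dualSet_iff, hu, sig_sig]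
        exact hf
      · rw [mu_sig, hfa, ← mu_sig, ← mu_sig, sig_sig]
  have e1 := Tdeg_eq m s _ i _ (Nat.sub_le _ _) hTD
  have e2 := Tdeg_eq m s _ i _ (Nat.sub_le _ _) hTA
  have e3 := Tdeg_eq m s _ _ _ hk hTC
  exact ⟨by rw [e1, e2], by rw [e2, e3]⟩
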